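/- Let F be a forest with at least one edge and let r ≥ 2 be an integer, and let k*(F,r) be the smallest integer k for which Builder has a winning strategy in the deterministic F-avoidance game with r colors and tree size restriction k. Then for every function N : ℕ → ℕ with n^{1−1/k*(F,r)} = o(N(n)) and N(n) ≤ n(n−1)/2 for all n, and for every sequence of online Painter strategies with r colors (one for each n), the probability that the board G_{N(n)} of the online F-avoidance game with r colors on n vertices contains a monochromatic copy of F tends to 1 as n → ∞. -/

import Mathlib

open SimpleGraph Filter Asymptotics
open scoped Classical

/-- A history of the game: the sequence of edges presented so far, together with
the colors (elements of `Fin r`, representing the colors `1,…,r`) they received. -/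
abbrev EdgeHistory (V : Type) (r : ℕ) := List (Sym2 V × Fin r)

/-- A Painter strategy on vertex type `V` with `r` colors: a function assigning a color
to every pair (history, new edge). -/
abbrev PainterStrategy (V : Type) (r : ℕ) := EdgeHistory V r → Sym2 V → Fin r

/-- Auxiliary function: run a Painter strategy on a list of presented edges,
extending the given history. -/
def runPainterAux {V : Type} {r : ℕ} (π : PainterStrategy V r) :
    EdgeHistory V r → List (Sym2 V) → EdgeHistory V r
  | h, [] => h
  | h, e :: es => runPainterAux π (h ++ [(e, π h e)]) es

/-- The colored history obtained by coloring the edges of `l` successively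
according to the Painter strategy `π`. -/
def runPainter {V : Type} {r : ℕ} (π : PainterStrategy V r) (l : List (Sym2 V)) :
    EdgeHistory V r :=
  runPainterAux π [] l

/-- `G` contains a copy of `F`, i.e. a subgraph isomorphic to `F`. -/
def IsCopy {α β : Type} (F : SimpleGraph α) (G : SimpleGraph β) : Prop :=
  ∃ f : α ↪ β, ∀ u v : α, F.Adj u v → G.Adj (f u) (f v)

/-- The graph formed by the edges of color `c` in the history `h`. -/
def colorGraph {V : Type} {r : ℕ} (h : EdgeHistory V r) (c : Fin r) : SimpleGraph V :=
  SimpleGraph.fromEdgeSet {e | (e, c) ∈ h}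

/-- The history `h` contains a monochromatic copy of `F`. -/
def HasMonoCopy {α V : Type} {r : ℕ} (F : SimpleGraph α) (h : EdgeHistory V r) : Prop :=
  ∃ c : Fin r, IsCopy F (colorGraph h c)

/-- The number of edges of `G` lying entirely within the vertex set `S`. -/
noncomputable def edgesWithin {V : Type} (G : SimpleGraph V) (S : Set V) : ℕ :=
  (G.edgeSet ∩ {e | ∀ v ∈ e, v ∈ S}).ncard

/-- `m(G) ≤ d`: every subgraph `H` of `G` with at least one vertex satisfies `e_H ≤ d · v_H`. -/
def DensityLE {V : Type} (G : SimpleGraph V) (d : ℝ) : Prop :=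
  ∀ S : Finset V, S.Nonempty → (edgesWithin G (↑S : Set V) : ℝ) ≤ d * (S.card : ℝ)

/-- `G` contains no cycle and every connected component of `G` has at most `k` edges
(equivalently, `G` is acyclic and contains no connected subgraph with more than `k` edges). -/
def TreeSizeLE {V : Type} (G : SimpleGraph V) (k : ℕ) : Prop :=
  G.IsAcyclic ∧ ∀ S : Set V, (G.induce S).Connected → edgesWithin G S ≤ k

/-- A legal sequence of moves for Builder: distinct non-loop edges. -/
def ValidEdgeSeq {V : Type} (l : List (Sym2 V)) : Prop :=
  l.Nodup ∧ ∀ e ∈ l, ¬ e.IsDiag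

/-- The (uncolored) board formed by a list of edges. -/
def boardOf {V : Type} (l : List (Sym2 V)) : SimpleGraph V :=
  SimpleGraph.fromEdgeSet {e | e ∈ l}

/-- Builder has a winning strategy in the deterministic `F`-avoidance game with `r` colors
and density restriction `d`. -/
def BuilderWinsDensity {α : Type} (F : SimpleGraph α) (r : ℕ) (d : ℝ) : Prop :=
  ∃ a : ℕ, ∀ π : PainterStrategy (Fin a) r, ∃ l : List (Sym2 (Fin a)),
    ValidEdgeSeq l ∧ (∀ i : ℕ, DensityLE (boardOf (l.take i)) d) ∧
    HasMonoCopy F (runPainter π l)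

/-- Builder has a winning strategy in the deterministic `F`-avoidance game with `r` colors
and tree size restriction `k`. -/
def BuilderWinsTree {α : Type} (F : SimpleGraph α) (r k : ℕ) : Prop :=
  ∃ a : ℕ, ∀ π : PainterStrategy (Fin a) r, ∃ l : List (Sym2 (Fin a)),
    ValidEdgeSeq l ∧ (∀ i : ℕ, TreeSizeLE (boardOf (l.take i)) k) ∧
    HasMonoCopy F (runPainter π l)

/-- The Painter strategy `π` on `a` vertices never creates a monochromatic copy of `F`
against any Builder play obeying the tree size restriction `k`. -/
def PainterAvoidsTree {α : Type} (F : SimpleGraph α) (r k a : ℕ)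
    (π : PainterStrategy (Fin a) r) : Prop :=
  ∀ l : List (Sym2 (Fin a)), ValidEdgeSeq l →
    (∀ i : ℕ, TreeSizeLE (boardOf (l.take i)) k) →
    ¬ HasMonoCopy F (runPainter π l)

/-- Painter has a winning strategy in the deterministic `F`-avoidance game with `r` colors
and tree size restriction `k`. -/
def PainterWinsTree {α : Type} (F : SimpleGraph α) (r k : ℕ) : Prop :=
  ∀ a : ℕ, ∃ π : PainterStrategy (Fin a) r, PainterAvoidsTree F r k a π

/-- A sequence of `N` distinct non-loop edges on `n` vertices. -/
def ValidSeqFun {n N : ℕ} (f : Fin N → Sym2 (Fin n)) : Prop :=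
  Function.Injective f ∧ ∀ i, ¬ (f i).IsDiag

/-- The probability (with respect to the uniformly random order in which the `N` distinct
edges of the random process on `n` vertices appear) of the event `P`. -/
noncomputable def onlineProb (n N : ℕ) (P : (Fin N → Sym2 (Fin n)) → Prop) : ℝ :=
  (Set.ncard {f : Fin N → Sym2 (Fin n) | ValidSeqFun f ∧ P f} : ℝ) /
  (Set.ncard {f : Fin N → Sym2 (Fin n) | ValidSeqFun f} : ℝ)

/-- Event: playing the online strategy `π` on the random edge sequence `f` produces
a monochromatic copy of `F`. -/
def OnlineMonoCopy {α : Type} (F : SimpleGraph α) {r n N : ℕ}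
    (π : PainterStrategy (Fin n) r) (f : Fin N → Sym2 (Fin n)) : Prop :=
  HasMonoCopy F (runPainter π (List.ofFn f))

/-!
Let `U` be a finite board on which Builder wins. Cut the random edges into rounds of `card (Sym2 U)`
blocks of `m` edges, where `m` is about `n ^ (1 - 1 / k)`. Planting a copy of Builder's play in a
round, along an injection of `U` into the `n` vertices and with one edge at a chosen place of each
block, forces a monochromatic copy of `F`. There are boundedly many plays, and two plantings of the
same play agree on a set `E` of edges only if their injections agree on the endpoints of `E`. A
forest with trees of at most `k` edges has `(k + 1) * card E ≤ k * card (endpoints E)`, which is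
exactly what makes the expected overlap of two random plantings bounded when `n ^ (k - 1) ≤ m ^ k`.
By the Cauchy–Schwarz inequality a round therefore succeeds with probability bounded below,
whatever was played before it, and as `N` eventually exceeds `M` rounds for every `M`, the failure
probability tends to zero. Drawing the edges of these rounds with replacement instead of without
costs a factor of at most `2`, since they number at most `n / 8`.
-/

section Forests

variable {U : Type}

/-- The set of vertices covered by the edges in `E`. -/
noncomputable def endpoints (E : Finset (Sym2 U)) : Finset U := E.biUnion Sym2.toFinset

lemma mem_endpoints {E : Finset (Sym2 U)} {x : U} : x ∈ endpoints E ↔ ∃ e ∈ E, x ∈ e := by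
  simp [endpoints]

lemma card_edgeFinset_add_one_le_of_isAcyclic [Fintype U] [Nonempty U] {G : SimpleGraph U}
    [Fintype G.edgeSet] (hG : G.IsAcyclic) : G.edgeFinset.card + 1 ≤ Fintype.card U := by
  obtain ⟨T, hGT, -, hT⟩ := connected_top.exists_isTree_le_of_le_of_isAcyclic le_top hG
  rw [← hT.card_edgeFinset]
  gcongr

lemma card_add_one_le_card_endpoints {G : SimpleGraph U} (hG : G.IsAcyclic)
    {E : Finset (Sym2 U)} (hE : ∀ e ∈ E, e ∈ G.edgeSet) (hne : E.Nonempty) :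
    E.card + 1 ≤ (endpoints E).card := by
  let H : SimpleGraph (endpoints E) := G.induce (endpoints E : Set U)
  have hH : H.IsAcyclic := hG.induce _
  have hsub : E ⊆ H.edgeFinset.image (Sym2.map Subtype.val) := by
    intro e he
    induction e using Sym2.ind with
    | _ x y =>
      refine Finset.mem_image.2 ⟨s(⟨x, mem_endpoints.2 ⟨_, he, Sym2.mem_mk_left x y⟩⟩,
        ⟨y, mem_endpoints.2 ⟨_, he, Sym2.mem_mk_right x y⟩⟩), ?_, rfl⟩
      exact mem_edgeFinset.2 (hE _ he)
  have : Nonempty (endpoints E) := by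
    obtain ⟨e, he⟩ := hne
    exact ⟨⟨e.out.1, mem_endpoints.2 ⟨e, he, e.out_fst_mem⟩⟩⟩
  calc E.card + 1 ≤ H.edgeFinset.card + 1 := by
        gcongr
        exact (Finset.card_le_card hsub).trans Finset.card_image_le
    _ ≤ (endpoints E).card := by
        simpa using card_edgeFinset_add_one_le_of_isAcyclic hH

lemma TreeSizeLE.card_le_of_component [Finite U] {G : SimpleGraph U} {k : ℕ} (hG : TreeSizeLE G k)
    (c : G.ConnectedComponent) {E : Finset (Sym2 U)} (hE : ∀ e ∈ E, e ∈ G.edgeSet)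
    (hc : ∀ e ∈ E, ∀ v ∈ e, v ∈ c.supp) : E.card ≤ k := by
  refine le_trans ?_ (hG.2 c.supp c.connected_toSimpleGraph)
  rw [← Set.ncard_coe_finset]
  exact Set.ncard_le_ncard (fun e he => ⟨hE e he, hc e he⟩) (Set.toFinite _)

lemma TreeSizeLE.succ_mul_card_le_of_component [Finite U] {G : SimpleGraph U} {k : ℕ}
    (hG : TreeSizeLE G k) (c : G.ConnectedComponent) {E : Finset (Sym2 U)}
    (hE : ∀ e ∈ E, e ∈ G.edgeSet) (hc : ∀ e ∈ E, ∀ v ∈ e, v ∈ c.supp) :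
    (k + 1) * E.card ≤ k * (endpoints E).card := by
  have hle_k := hG.card_le_of_component c hE hc
  rcases E.eq_empty_or_nonempty with rfl | hne
  · simp
  · have := card_add_one_le_card_endpoints hG.1 hE hne
    nlinarith

lemma TreeSizeLE.succ_mul_card_le [Finite U] {G : SimpleGraph U} {k : ℕ} (hG : TreeSizeLE G k)
    {E : Finset (Sym2 U)} (hE : ∀ e ∈ E, e ∈ G.edgeSet) :
    (k + 1) * E.card ≤ k * (endpoints E).card := by
  have := Fintype.ofFinite U
  let inComponent (c : G.ConnectedComponent) : Finset (Sym2 U) := {e ∈ E | ∀ v ∈ e, v ∈ c.supp}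
  have hcover : E ⊆ Finset.univ.biUnion inComponent := by
    intro e he
    induction e using Sym2.ind with
    | _ x y =>
      have hxy : G.Adj x y := hE _ he
      simp only [inComponent, Finset.mem_biUnion, Finset.mem_univ, true_and, Finset.mem_filter]
      refine ⟨G.connectedComponentMk x, he, fun v hv => ?_⟩
      rcases Sym2.mem_iff.1 hv with rfl | rfl
      · exact ConnectedComponent.connectedComponentMk_mem
      · exact ConnectedComponent.sound hxy.symm.reachable
  have hcovered (c : G.ConnectedComponent) : endpoints (inComponent c) ⊆
      {x ∈ endpoints E | G.connectedComponentMk x = c} := by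
    intro x hx
    obtain ⟨e, he, hxe⟩ := mem_endpoints.1 hx
    obtain ⟨heE, hec⟩ := Finset.mem_filter.1 he
    exact Finset.mem_filter.2 ⟨mem_endpoints.2 ⟨e, heE, hxe⟩, hec x hxe⟩
  calc (k + 1) * E.card ≤ (k + 1) * ∑ c, (inComponent c).card := by
        gcongr
        exact (Finset.card_le_card hcover).trans Finset.card_biUnion_le
    _ ≤ ∑ c, k * (endpoints (inComponent c)).card := by
        rw [Finset.mul_sum]
        exact Finset.sum_le_sum fun c _ => hG.succ_mul_card_le_of_component c
          (fun e he => hE e (Finset.mem_filter.1 he).1) fun e he => (Finset.mem_filter.1 he).2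
    _ ≤ k * ∑ c, {x ∈ endpoints E | G.connectedComponentMk x = c}.card := by
        rw [Finset.mul_sum]
        gcongr with c
        exact hcovered c
    _ = k * (endpoints E).card := by
        rw [Finset.card_eq_sum_card_fiberwise (f := G.connectedComponentMk) (t := Finset.univ)
          (by simp)]

end Forests

section LegalPlays

variable {U : Type}

/-- The moves Builder may make in the deterministic game with tree size restriction `k`. -/
def LegalPlay (k : ℕ) (l : List (Sym2 U)) : Prop :=
  ValidEdgeSeq l ∧ ∀ i : ℕ, TreeSizeLE (boardOf (l.take i)) k

lemma LegalPlay.length_le [Fintype U] {k : ℕ} {l : List (Sym2 U)} (hl : LegalPlay k l) :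
    l.length ≤ Fintype.card (Sym2 U) :=
  hl.1.1.length_le_card

lemma LegalPlay.succ_mul_card_le [Finite U] {k : ℕ} {l : List (Sym2 U)} (hl : LegalPlay k l)
    {E : Finset (Sym2 U)} (hE : E ⊆ l.toFinset) :
    (k + 1) * E.card ≤ k * (endpoints E).card := by
  have hboard : TreeSizeLE (boardOf l) k := by simpa using hl.2 l.length
  refine hboard.succ_mul_card_le fun e he => ?_
  have hel : e ∈ l := List.mem_toFinset.1 (hE he)
  rw [boardOf, edgeSet_fromEdgeSet]
  exact ⟨hel, hl.1.2 e hel⟩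

lemma LegalPlay.pos_of_ne_nil [Finite U] {k : ℕ} {l : List (Sym2 U)} (hl : LegalPlay k l)
    (hne : l ≠ []) : 0 < k := by
  have := hl.succ_mul_card_le subset_rfl
  by_contra! hk
  simp_all

variable (U) in
lemma finite_setOf_legalPlay [Finite U] (k : ℕ) : {l : List (Sym2 U) | LegalPlay k l}.Finite := by
  have := Fintype.ofFinite U
  exact (List.finite_length_le _ _).subset fun _ hl => hl.length_le

end LegalPlays

section PainterRuns

variable {V : Type} {r : ℕ} (π : PainterStrategy V r)

lemma runPainterAux_append (h : EdgeHistory V r) (l₁ l₂ : List (Sym2 V)) :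
    runPainterAux π h (l₁ ++ l₂) = runPainterAux π (runPainterAux π h l₁) l₂ := by
  induction l₁ generalizing h with
  | nil => rfl
  | cons _ _ ih => exact ih _

lemma map_fst_runPainterAux (h : EdgeHistory V r) (l : List (Sym2 V)) :
    (runPainterAux π h l).map Prod.fst = h.map Prod.fst ++ l := by
  induction l generalizing h with
  | nil => simp [runPainterAux]
  | cons e l ih => simp [runPainterAux, ih]

lemma mem_runPainterAux {h : EdgeHistory V r} {l : List (Sym2 V)} {e : Sym2 V} {c : Fin r} :
    (e, c) ∈ runPainterAux π h l ↔
      (e, c) ∈ h ∨ ∃ l₁, l₁ ++ [e] <+: l ∧ c = π (runPainterAux π h l₁) e := by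
  induction l using List.reverseRecOn with
  | nil => simp [runPainterAux]
  | append_singleton l x ih =>
    simp only [runPainterAux_append, runPainterAux, List.mem_append, ih, List.mem_singleton,
      Prod.mk.injEq, List.prefix_concat_iff]
    constructor
    · rintro ((hh | ⟨l₁, hl₁, hc⟩) | ⟨rfl, hc⟩)
      · exact .inl hh
      · exact .inr ⟨l₁, .inr hl₁, hc⟩
      · exact .inr ⟨l, .inl rfl, hc⟩
    · rintro (hh | ⟨l₁, heq | hl₁, hc⟩)
      · exact .inl (.inl hh)
      · obtain ⟨rfl, hx⟩ := List.append_inj' heq rfl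
        obtain rfl := List.singleton_inj.1 hx
        exact .inr ⟨rfl, hc⟩
      · exact .inl (.inr ⟨l₁, hl₁, hc⟩)

lemma subset_runPainterAux (h : EdgeHistory V r) (l : List (Sym2 V)) :
    h ⊆ runPainterAux π h l :=
  fun _ hp => (mem_runPainterAux π).2 (.inl hp)

/-- Painter can play on the board `U` by watching the image of the play under `φ` inside a longer
run of `π`: here `before l₁ e` lists the edges that run presents before the image of the move `e`
made after the moves `l₁`. -/
lemma exists_simulating_painter {U : Type} (φ : U → V) (h₀ : EdgeHistory V r)
    (before : List (Sym2 U) → Sym2 U → List (Sym2 V)) :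
    ∃ π' : PainterStrategy U r, ∀ (l : List (Sym2 U)) (w : List (Sym2 V)),
      (∀ l₁ e, l₁ ++ [e] <+: l → before l₁ e ++ [e.map φ] <+: w) →
      ∀ e c, (e, c) ∈ runPainter π' l → (e.map φ, c) ∈ runPainterAux π h₀ w := by
  refine ⟨fun h e => π (runPainterAux π h₀ (before (h.map Prod.fst) e)) (e.map φ),
    fun l w hw e c hec => ?_⟩
  obtain hnil | ⟨l₁, hl₁, hc⟩ := (mem_runPainterAux _).1 hec
  · simp at hnil
  · refine (mem_runPainterAux π).2 (.inr ⟨before l₁ e, hw l₁ e hl₁, ?_⟩)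
    simpa [map_fst_runPainterAux] using hc

variable {α : Type} {F : SimpleGraph α}

lemma HasMonoCopy.transfer {U : Type} {h : EdgeHistory U r} {h' : EdgeHistory V r} (φ : U ↪ V)
    (hcopy : HasMonoCopy F h) (hsub : ∀ e c, (e, c) ∈ h → (e.map φ, c) ∈ h') :
    HasMonoCopy F h' := by
  obtain ⟨c, f, hf⟩ := hcopy
  refine ⟨c, f.trans φ, fun u v huv => ?_⟩
  obtain ⟨hmem, hne⟩ := (fromEdgeSet_adj _).1 (hf u v huv)
  exact (fromEdgeSet_adj _).2 ⟨hsub _ c hmem, φ.injective.ne hne⟩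

lemma HasMonoCopy.mono {h h' : EdgeHistory V r} (hcopy : HasMonoCopy F h) (hsub : h ⊆ h') :
    HasMonoCopy F h' :=
  hcopy.transfer (.refl V) fun e c hec => by simpa using hsub hec

lemma HasMonoCopy.ne_nil_of_runPainter {l : List (Sym2 V)} (hF : F.edgeSet.Nonempty)
    (hcopy : HasMonoCopy F (runPainter π l)) : l ≠ [] := by
  rintro rfl
  obtain ⟨c, f, hf⟩ := hcopy
  obtain ⟨e, he⟩ := hF
  induction e using Sym2.ind with
  | _ u v => simpa [colorGraph, runPainter, runPainterAux] using hf u v he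

end PainterRuns

section Patterns

/-- A partial assignment of symbols in `S` to positions in `K`. -/
abbrev Pattern (K S : Type*) := K → Option S

namespace Pattern

variable {K S Z : Type*}

/-- The word `f` with the prescribed symbols of `p` planted into it. -/
def plant (p : Pattern K S) (f : K → S) (x : K) : S := (p x).getD (f x)

/-- The word `g` carries all the prescribed symbols of `p`. -/
def Occurs (p : Pattern K S) (g : K → S) : Prop := ∀ x, ∀ s ∈ p x, g x = s

lemma occurs_plant (p : Pattern K S) (f : K → S) : p.Occurs (p.plant f) := by
  intro x s hs
  simp [plant, Option.mem_def.1 hs]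

variable [Fintype K]

/-- The positions at which `p` prescribes a symbol. -/
def support (p : Pattern K S) : Finset K := {x | (p x).isSome}

lemma mem_support {p : Pattern K S} {x : K} : x ∈ p.support ↔ ∃ s, s ∈ p x := by
  simp [support, Option.isSome_iff_exists]

lemma plant_eq_of_notMem_support {p : Pattern K S} {x : K} (hx : x ∉ p.support) (f : K → S) :
    p.plant f x = f x := by
  simp_all [plant, support]

variable [DecidableEq K] [Fintype S]

lemma card_filter_plant_mem_le (p : Pattern K S) (W : Finset (K → S)) :
    Finset.card {f | p.plant f ∈ W} ≤
      Finset.card {g ∈ W | p.Occurs g} * Fintype.card S ^ p.support.card := by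
  have hcard : Fintype.card S ^ p.support.card =
      (Finset.univ : Finset (p.support → S)).card := by simp
  rw [hcard, ← Finset.card_product]
  refine Finset.card_le_card_of_injOn (fun f => (p.plant f, fun x => f x)) ?_ ?_
  · intro f hf
    simpa [p.occurs_plant f] using hf
  · intro f _ f' _ heq
    obtain ⟨hplant, hsupport⟩ := Prod.mk.injEq .. ▸ heq
    funext x
    by_cases hx : x ∈ p.support
    · exact congrFun hsupport ⟨x, hx⟩
    · simpa [plant_eq_of_notMem_support hx] using congrFun hplant x

lemma card_filter_eqOn_mul_pow (P : Finset K) (g₀ : K → S) :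
    Finset.card {g : K → S | ∀ x ∈ P, g x = g₀ x} * Fintype.card S ^ P.card =
      Fintype.card S ^ Fintype.card K := by
  have hpi : ({g | ∀ x ∈ P, g x = g₀ x} : Finset (K → S)) =
      Fintype.piFinset fun x => if x ∈ P then {g₀ x} else Finset.univ := by
    ext g
    simp only [Finset.mem_filter_univ, Fintype.mem_piFinset]
    refine forall_congr' fun x => ?_
    by_cases hx : x ∈ P <;> simp [hx]
  have hcard (x : K) : (if x ∈ P then {g₀ x} else Finset.univ : Finset S).card =
      if x ∈ P then 1 else Fintype.card S := by
    split_ifs <;> simp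
  rw [hpi, Fintype.card_piFinset, Finset.prod_congr rfl fun x _ => hcard x, Finset.prod_ite]
  simp only [Finset.prod_const, one_pow, one_mul, ← pow_add]
  rw [← Finset.compl_filter, Finset.filter_univ_mem, Finset.card_compl_add_card]

/-- The factor by which the density of words carrying both `p` and `p'` exceeds the product of
the two densities. -/
noncomputable def overlap (p p' : Pattern K S) : ℕ :=
  if ∃ g, p.Occurs g ∧ p'.Occurs g then Fintype.card S ^ (p.support ∩ p'.support).card else 0

lemma card_filter_occurs_mul_pow_le (p p' : Pattern K S) :
    Finset.card {g | p.Occurs g ∧ p'.Occurs g} *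
        (Fintype.card S ^ p.support.card * Fintype.card S ^ p'.support.card) ≤
      Fintype.card S ^ Fintype.card K * p.overlap p' := by
  by_cases h : ∃ g, p.Occurs g ∧ p'.Occurs g
  · obtain ⟨g₀, hg₀, hg₀'⟩ := h
    have hdetermined : Finset.card {g | p.Occurs g ∧ p'.Occurs g} ≤
        Finset.card {g : K → S | ∀ x ∈ p.support ∪ p'.support, g x = g₀ x} := by
      refine Finset.card_le_card fun g hg => ?_
      obtain ⟨hg, hg'⟩ := Finset.mem_filter_univ _ |>.1 hg
      refine Finset.mem_filter_univ _ |>.2 fun x hx => ?_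
      rcases Finset.mem_union.1 hx with hx | hx
      · obtain ⟨s, hs⟩ := mem_support.1 hx
        rw [hg x s hs, hg₀ x s hs]
      · obtain ⟨s, hs⟩ := mem_support.1 hx
        rw [hg' x s hs, hg₀' x s hs]
    rw [overlap, if_pos ⟨g₀, hg₀, hg₀'⟩, ← pow_add, ← Finset.card_union_add_card_inter, pow_add,
      ← mul_assoc, ← card_filter_eqOn_mul_pow (p.support ∪ p'.support) g₀]
    gcongr
  · rw [Finset.filter_false_of_mem fun g _ hg => h ⟨g, hg⟩]
    simp

lemma sq_sum_card_filter_plant_mem_le [Fintype Z] (p : Z → Pattern K S) (W : Finset (K → S)) :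
    (∑ z, Finset.card {f | (p z).plant f ∈ W}) ^ 2 ≤
      W.card * (Fintype.card S ^ Fintype.card K * ∑ z, ∑ z', (p z).overlap (p z')) := by
  let weight (g : K → S) (z : Z) : ℕ :=
    if (p z).Occurs g then Fintype.card S ^ (p z).support.card else 0
  have hweight : ∑ z, Finset.card {f | (p z).plant f ∈ W} ≤ ∑ g ∈ W, ∑ z, weight g z := by
    rw [Finset.sum_comm]
    refine Finset.sum_le_sum fun z _ => ((p z).card_filter_plant_mem_le W).trans_eq ?_
    simp [weight, Finset.sum_ite]
  have hpair (z z' : Z) : ∑ g, weight g z * weight g z' ≤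
      Fintype.card S ^ Fintype.card K * (p z).overlap (p z') := by
    refine le_trans (le_of_eq ?_) ((p z).card_filter_occurs_mul_pow_le (p z'))
    simp only [weight, ite_zero_mul_ite_zero, Finset.sum_ite, Finset.sum_const, smul_eq_mul,
      mul_zero, add_zero]
  calc _ ≤ (∑ g ∈ W, ∑ z, weight g z) ^ 2 := by gcongr
    _ ≤ W.card * ∑ g ∈ W, (∑ z, weight g z) ^ 2 := sq_sum_le_card_mul_sum_sq
    _ ≤ W.card * ∑ g, (∑ z, weight g z) ^ 2 := by
        gcongr
        exact Finset.subset_univ W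
    _ = W.card * ∑ z, ∑ z', ∑ g, weight g z * weight g z' := by
        simp_rw [sq, Finset.sum_mul_sum]
        rw [Finset.sum_comm]
        simp_rw [Finset.sum_comm (s := Finset.univ (α := K → S))]
    _ ≤ _ := by
        gcongr
        simp_rw [Finset.mul_sum]
        exact Finset.sum_le_sum fun z _ => Finset.sum_le_sum fun z' _ => hpair z z'

/-- A second-moment bound: if each word can be brought into `W` by planting one of boundedly many
patterns, and these overlap little on average over the placement `z`, then `W` is dense. -/
lemma card_pow_le_mul_card [Nonempty S] [Fintype Z] [Nonempty Z] {Λ : Type*} {L : Finset Λ}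
    {p : Λ → Z → Pattern K S} {W : Finset (K → S)} {B : ℕ}
    (hplant : ∀ z f, ∃ l ∈ L, (p l z).plant f ∈ W)
    (hoverlap : ∀ l ∈ L, ∑ z, ∑ z', (p l z).overlap (p l z') ≤ B * Fintype.card Z ^ 2) :
    Fintype.card S ^ Fintype.card K ≤ L.card ^ 2 * B * W.card := by
  have htotal : Fintype.card Z * Fintype.card S ^ Fintype.card K ≤
      ∑ l ∈ L, ∑ z, Finset.card {f | (p l z).plant f ∈ W} := by
    rw [Finset.sum_comm, ← smul_eq_mul, ← Finset.card_univ, ← Finset.sum_const]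
    refine Finset.sum_le_sum fun z _ => ?_
    rw [← Fintype.card_fun, ← Finset.card_univ]
    refine le_trans (Finset.card_le_card fun f _ => ?_) Finset.card_biUnion_le
    simpa using hplant z f
  have hpos : 0 < Fintype.card Z ^ 2 * Fintype.card S ^ Fintype.card K := by positivity
  refine Nat.le_of_mul_le_mul_right ?_ hpos
  calc _ = (Fintype.card Z * Fintype.card S ^ Fintype.card K) ^ 2 := by ring
    _ ≤ (∑ l ∈ L, ∑ z, Finset.card {f | (p l z).plant f ∈ W}) ^ 2 := by gcongr
    _ ≤ L.card * ∑ l ∈ L, (∑ z, Finset.card {f | (p l z).plant f ∈ W}) ^ 2 :=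
        sq_sum_le_card_mul_sum_sq
    _ ≤ L.card * ∑ l ∈ L,
          W.card * (Fintype.card S ^ Fintype.card K * (B * Fintype.card Z ^ 2)) := by
        gcongr with l hl
        exact (sq_sum_card_filter_plant_mem_le (p l) W).trans (by gcongr; exact hoverlap l hl)
    _ = _ := by
        rw [Finset.sum_const, smul_eq_mul]
        ring

end Pattern

end Patterns

section PlantedPlays

variable {U V : Type} {b m : ℕ}

/-- The pattern prescribing the image of the play `l` under `φ`, spread over `b` blocks of `m`
positions: the `i`-th edge `e` of `l` is placed in block `i` at offset `t e`. -/
def playPattern (b : ℕ) (l : List (Sym2 U)) (φ : U → V) (t : Sym2 U → Fin m) :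
    Pattern (Fin (b * m)) (Sym2 V) :=
  fun x => (l[(x.divNat : ℕ)]?.filter (t · = x.modNat)).map (Sym2.map φ)

lemma mem_playPattern {l : List (Sym2 U)} {φ : U → V} {t : Sym2 U → Fin m} {x : Fin (b * m)}
    {s : Sym2 V} : s ∈ playPattern b l φ t x ↔
      ∃ e, (l[(x.divNat : ℕ)]? = some e ∧ t e = x.modNat) ∧ e.map φ = s := by
  simp [playPattern]

lemma map_mem_playPattern {l : List (Sym2 U)} {φ : U → V} {t : Sym2 U → Fin m} {e : Sym2 U}
    (i : Fin b) (he : l[(i : ℕ)]? = some e) :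
    e.map φ ∈ playPattern b l φ t (finProdFinEquiv (i, t e)) := by
  have hpos := finProdFinEquiv.symm_apply_apply (i, t e)
  obtain ⟨hdiv, hmod⟩ := Prod.mk.injEq .. ▸ hpos
  rw [mem_playPattern, hdiv, hmod]
  exact ⟨e, ⟨he, rfl⟩, rfl⟩

lemma playPattern_congr_of_prefix {l₁ l : List (Sym2 U)} (hl : l₁ <+: l) (φ : U → V)
    (t : Sym2 U → Fin m) {x : Fin (b * m)} (hx : (x.divNat : ℕ) < l₁.length) :
    playPattern b l₁ φ t x = playPattern b l φ t x := by
  rw [playPattern, playPattern, List.prefix_iff_getElem?.1 hl _ hx, List.getElem?_eq_getElem hx]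

lemma take_concat_prefix_ofFn {S : Type*} {L : ℕ} {g g' : Fin L → S} {x : Fin L}
    (hg : ∀ y < x, g' y = g y) :
    (List.ofFn g').take x ++ [g x] <+: List.ofFn g := by
  have htake : (List.ofFn g').take x = (List.ofFn g).take x := by
    refine List.ext_getElem (by simp) fun y hy _ => ?_
    simp only [List.length_take, List.length_ofFn, lt_inf_iff] at hy
    simpa using hg ⟨y, hy.2⟩ hy.1
  have hx : g x = (List.ofFn g)[(x : ℕ)]'(by simp) := by simp
  rw [htake, hx, List.take_append_getElem]
  exact List.take_prefix _ _

lemma take_plant_concat_prefix {l l₁ : List (Sym2 U)} {e : Sym2 U} (hl : l₁ ++ [e] <+: l)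
    (hb : l.length ≤ b) (φ : U → V) (t : Sym2 U → Fin m) (f : Fin (b * m) → Sym2 V) :
    (List.ofFn ((playPattern b (l₁ ++ [e]) φ t).plant f)).take (t e + m * l₁.length) ++
      [e.map φ] <+: List.ofFn ((playPattern b l φ t).plant f) := by
  have hlt : l₁.length < b := by
    have := hl.length_le
    simp only [List.length_append, List.length_singleton] at this
    lia
  let x : Fin (b * m) := finProdFinEquiv (⟨l₁.length, hlt⟩, t e)
  have hx : (playPattern b l φ t).plant f x = e.map φ :=
    Pattern.occurs_plant _ f x _ <| map_mem_playPattern _ <| by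
      simpa using List.prefix_iff_getElem?.1 hl l₁.length (by simp)
  have hbefore : ∀ y < x, (playPattern b (l₁ ++ [e]) φ t).plant f y =
      (playPattern b l φ t).plant f y := by
    intro y hy
    have hblock : (y.divNat : ℕ) ≤ l₁.length := by
      have hdiv : y.divNat ≤ x.divNat := Nat.div_le_div_right hy.le
      have hxdiv : x.divNat = ⟨l₁.length, hlt⟩ :=
        congrArg Prod.fst (finProdFinEquiv.symm_apply_apply (⟨l₁.length, hlt⟩, t e))
      rw [hxdiv] at hdiv
      exact hdiv
    rw [Pattern.plant, Pattern.plant, playPattern_congr_of_prefix hl φ t]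
    exact hblock.trans_lt (by simp)
  simpa [hx, x] using take_concat_prefix_ofFn hbefore

lemma exists_legalPlay_hasMonoCopy_plant {α : Type} {F : SimpleGraph α} {r k : ℕ} [Fintype U]
    (hwin : ∀ π : PainterStrategy U r, ∃ l, LegalPlay k l ∧ HasMonoCopy F (runPainter π l))
    (hb : Fintype.card (Sym2 U) ≤ b) (π : PainterStrategy V r) (h₀ : EdgeHistory V r)
    (φ : U ↪ V) (t : Sym2 U → Fin m) (f : Fin (b * m) → Sym2 V) :
    ∃ l, LegalPlay k l ∧
      HasMonoCopy F (runPainterAux π h₀ (List.ofFn ((playPattern b l φ t).plant f))) := by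
  obtain ⟨π', hπ'⟩ := exists_simulating_painter π φ h₀ fun l₁ e =>
    (List.ofFn ((playPattern b (l₁ ++ [e]) φ t).plant f)).take (t e + m * l₁.length)
  obtain ⟨l, hl, hcopy⟩ := hwin π'
  exact ⟨l, hl, hcopy.transfer φ <| hπ' l _ fun l₁ e hl₁ =>
    take_plant_concat_prefix hl₁ (hl.length_le.trans hb) φ t f⟩

end PlantedPlays

section Overlaps

variable {U V : Type} {b m k : ℕ}

lemma exists_getElem?_of_mem_support_inter {l : List (Sym2 U)} {φ φ' : U → V}
    {t t' : Sym2 U → Fin m} {x : Fin (b * m)}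
    (hx : x ∈ (playPattern b l φ t).support ∩ (playPattern b l φ' t').support) :
    ∃ e, l[(x.divNat : ℕ)]? = some e ∧ t e = x.modNat ∧ t' e = x.modNat := by
  simp only [Finset.mem_inter, Pattern.mem_support, mem_playPattern] at hx
  obtain ⟨⟨_, e, ⟨he, hte⟩, -⟩, _, e', ⟨he', hte'⟩, -⟩ := hx
  obtain rfl : e = e' := Option.some_injective _ (he.symm.trans he')
  exact ⟨e, he, hte, hte'⟩

lemma card_support_inter_playPattern_le {l : List (Sym2 U)} (hl : l.Nodup)
    (φ φ' : U → V) (t t' : Sym2 U → Fin m) :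
    ((playPattern b l φ t).support ∩ (playPattern b l φ' t').support).card ≤
      {e ∈ l.toFinset | t e = t' e}.card := by
  rw [← Finset.card_map (s := {e ∈ l.toFinset | t e = t' e}) Function.Embedding.some]
  refine Finset.card_le_card_of_injOn (fun x => l[(x.divNat : ℕ)]?) ?_ ?_
  · intro x hx
    obtain ⟨e, he, hte, hte'⟩ := exists_getElem?_of_mem_support_inter hx
    refine Finset.mem_map.2 ⟨e, Finset.mem_filter.2 ⟨?_, hte.trans hte'.symm⟩, he.symm⟩
    exact List.mem_toFinset.2 (List.mem_of_getElem? he)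
  · intro x hx y hy hxy
    obtain ⟨e, he, hte, -⟩ := exists_getElem?_of_mem_support_inter hx
    obtain ⟨e', he', hte', -⟩ := exists_getElem?_of_mem_support_inter hy
    obtain rfl : e = e' := Option.some_injective _ (he.symm.trans (hxy.trans he'))
    have hdiv : x.divNat = y.divNat := by
      obtain ⟨hx, hxe⟩ := List.getElem?_eq_some_iff.1 he
      obtain ⟨hy, hye⟩ := List.getElem?_eq_some_iff.1 he'
      exact Fin.ext (hl.getElem_inj_iff.1 (hxe.trans hye.symm))
    exact finProdFinEquiv.symm.injective (Prod.ext hdiv (hte.symm.trans hte'))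

lemma map_eq_map_of_occurs {l : List (Sym2 U)} (hb : l.length ≤ b) {φ φ' : U → V}
    {t t' : Sym2 U → Fin m} {g : Fin (b * m) → Sym2 V} (hg : (playPattern b l φ t).Occurs g)
    (hg' : (playPattern b l φ' t').Occurs g) {e : Sym2 U} (he : e ∈ l) (hte : t e = t' e) :
    e.map φ = e.map φ' := by
  obtain ⟨i, hi, rfl⟩ := List.mem_iff_getElem.1 he
  have hsome : l[i]? = some l[i] := List.getElem?_eq_getElem hi
  rw [← hg _ _ (map_mem_playPattern ⟨i, hi.trans_le hb⟩ hsome),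
    ← hg' _ _ (map_mem_playPattern ⟨i, hi.trans_le hb⟩ hsome), hte]

/-- The placements `z` and `z'`, each an embedding together with offsets for the edges, put every
edge in `E` at the same offset and with the same image. -/
def AgreeOn (E : Finset (Sym2 U)) (z z' : (U ↪ V) × (Sym2 U → Fin m)) : Prop :=
  ∀ e ∈ E, e.map z.1 = e.map z'.1 ∧ z.2 e = z'.2 e

lemma overlap_playPattern_le [Fintype V] [Nonempty (Sym2 V)] {l : List (Sym2 U)} (hl : l.Nodup)
    (hb : l.length ≤ b) (z z' : (U ↪ V) × (Sym2 U → Fin m)) :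
    (playPattern b l z.1 z.2).overlap (playPattern b l z'.1 z'.2) ≤
      ∑ E ∈ l.toFinset.powerset, if AgreeOn E z z' then Fintype.card (Sym2 V) ^ E.card else 0 := by
  by_cases h : ∃ g, (playPattern b l z.1 z.2).Occurs g ∧ (playPattern b l z'.1 z'.2).Occurs g
  · obtain ⟨g, hg, hg'⟩ := h
    have hagree : AgreeOn {e ∈ l.toFinset | z.2 e = z'.2 e} z z' := by
      intro e he
      obtain ⟨hel, hte⟩ := Finset.mem_filter.1 he
      exact ⟨map_eq_map_of_occurs hb hg hg' (List.mem_toFinset.1 hel) hte, hte⟩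
    rw [Pattern.overlap, if_pos ⟨g, hg, hg'⟩]
    have hmem : {e ∈ l.toFinset | z.2 e = z'.2 e} ∈
        Finset.filter (AgreeOn · z z') l.toFinset.powerset :=
      Finset.mem_filter.2 ⟨Finset.mem_powerset.2 (Finset.filter_subset _ _), hagree⟩
    rw [← Finset.sum_filter]
    exact (Nat.pow_le_pow_right Fintype.card_pos
      (card_support_inter_playPattern_le hl _ _ _ _)).trans <|
      Finset.single_le_sum (f := fun E => Fintype.card (Sym2 V) ^ E.card)
        (fun _ _ => Nat.zero_le _) hmem
  · rw [Pattern.overlap, if_neg h]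
    exact Nat.zero_le _

/-- This is where the exponent `1 - 1 / k` of the threshold comes from. -/
lemma sq_pow_le_pow_mul_pow {n q v : ℕ} (hn : 0 < n) (hk : 0 < k) (hm : n ^ (k - 1) ≤ m ^ k)
    (hqv : (k + 1) * q ≤ k * v) : (n ^ 2) ^ q ≤ m ^ q * n ^ v := by
  obtain ⟨k, rfl⟩ := Nat.exists_eq_add_one.2 hk
  rw [← Nat.pow_le_pow_iff_left (n := k + 1) (by simp)]
  calc ((n ^ 2) ^ q) ^ (k + 1) = n ^ (2 * q * (k + 1)) := by ring
    _ ≤ n ^ (k * q + (k + 1) * v) := Nat.pow_le_pow_right hn (by nlinarith)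
    _ = (n ^ k) ^ q * n ^ ((k + 1) * v) := by ring
    _ ≤ (m ^ (k + 1)) ^ q * n ^ ((k + 1) * v) :=
        Nat.mul_le_mul_right _ (Nat.pow_le_pow_left (by simpa using hm) q)
    _ = (m ^ q * n ^ v) ^ (k + 1) := by ring

variable [Fintype U] [Fintype V]

lemma card_filter_map_eq_mul_pow_le (E : Finset (Sym2 U)) (φ : U → V) :
    Finset.card {ψ : U → V | ∀ e ∈ E, e.map φ = e.map ψ} *
        Fintype.card V ^ (endpoints E).card ≤
      2 ^ Fintype.card U * Fintype.card V ^ Fintype.card U := by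
  have hcandidates (x : U) : ∃ s : Finset V,
      s.card ≤ (if x ∈ endpoints E then 2 else Fintype.card V) ∧
      ∀ ψ : U → V, (∀ e ∈ E, e.map φ = e.map ψ) → ψ x ∈ s := by
    split_ifs with hx
    · obtain ⟨e, he, hxe⟩ := mem_endpoints.1 hx
      refine ⟨(e.map φ).toFinset, ?_, fun ψ hψ => ?_⟩
      · rw [Sym2.card_toFinset]
        split_ifs <;> simp
      · rw [Sym2.mem_toFinset, hψ e he]
        exact Sym2.mem_map.2 ⟨x, hxe, rfl⟩
    · exact ⟨Finset.univ, le_rfl, fun _ _ => Finset.mem_univ _⟩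
  choose s hs hmem using hcandidates
  have hsub : ({ψ : U → V | ∀ e ∈ E, e.map φ = e.map ψ} : Finset (U → V)) ⊆
      Fintype.piFinset s := by
    intro ψ hψ
    exact Fintype.mem_piFinset.2 fun x => hmem x ψ (Finset.mem_filter_univ _ |>.1 hψ)
  calc _ ≤ (∏ x, if x ∈ endpoints E then 2 else Fintype.card V) *
        Fintype.card V ^ (endpoints E).card := by
        refine Nat.mul_le_mul_right _ ((Finset.card_le_card hsub).trans ?_)
        rw [Fintype.card_piFinset]
        exact Finset.prod_le_prod' fun x _ => hs x
    _ = 2 ^ (endpoints E).card * Fintype.card V ^ Fintype.card U := by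
        rw [Finset.prod_ite, Finset.prod_const, Finset.prod_const, ← Finset.compl_filter,
          Finset.filter_univ_mem, mul_assoc, ← pow_add, Finset.card_compl_add_card]
    _ ≤ _ := by
        gcongr
        · norm_num
        · exact Finset.card_le_univ _

lemma card_pow_le_two_pow_mul_card_embedding (h : 2 * Fintype.card U ≤ Fintype.card V) :
    Fintype.card V ^ Fintype.card U ≤ 2 ^ Fintype.card U * Fintype.card (U ↪ V) := by
  rw [Fintype.card_embedding_eq]
  calc Fintype.card V ^ Fintype.card U
      ≤ (2 * (Fintype.card V + 1 - Fintype.card U)) ^ Fintype.card U := by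
        gcongr
        lia
    _ = 2 ^ Fintype.card U * (Fintype.card V + 1 - Fintype.card U) ^ Fintype.card U := mul_pow ..
    _ ≤ _ := by
        gcongr
        exact Nat.pow_sub_le_descFactorial _ _

lemma card_sym2_le_sq : Fintype.card (Sym2 V) ≤ Fintype.card V ^ 2 := by
  rw [Sym2.card, Nat.choose_two_right]
  exact Nat.div_le_of_le_mul (by simp; nlinarith [Nat.le_self_pow two_ne_zero (Fintype.card V)])

lemma card_filter_agreeOn_mul_pow_le [Nonempty V] (hk : 0 < k)
    (hUV : 2 * Fintype.card U ≤ Fintype.card V) (hm : Fintype.card V ^ (k - 1) ≤ m ^ k)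
    {E : Finset (Sym2 U)} (hE : (k + 1) * E.card ≤ k * (endpoints E).card)
    (z : (U ↪ V) × (Sym2 U → Fin m)) :
    Finset.card {z' | AgreeOn E z z'} * Fintype.card (Sym2 V) ^ E.card ≤
      4 ^ Fintype.card U * Fintype.card ((U ↪ V) × (Sym2 U → Fin m)) := by
  let Φ : Finset (U → V) := {ψ | ∀ e ∈ E, e.map z.1 = e.map ψ}
  let T : Finset (Sym2 U → Fin m) := {s | ∀ e ∈ E, s e = z.2 e}
  have hprod : Finset.card {z' | AgreeOn E z z'} ≤ Φ.card * T.card := by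
    rw [← Finset.card_product]
    refine Finset.card_le_card_of_injOn (fun z' => (⇑z'.1, z'.2)) ?_ ?_
    · intro z' hz'
      have hagree : AgreeOn E z z' := by simpa using hz'
      simpa [Φ, T] using ⟨fun e he => (hagree e he).1, fun e he => (hagree e he).2.symm⟩
    · intro z' _ z'' _ heq
      obtain ⟨hφ, ht⟩ := Prod.mk.injEq .. ▸ heq
      exact Prod.ext (DFunLike.coe_injective hφ) ht
  have hT : T.card * m ^ E.card = Fintype.card (Sym2 U → Fin m) := by
    have heqOn := Pattern.card_filter_eqOn_mul_pow E z.2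
    rw [← Fintype.card_fun, Fintype.card_fin] at heqOn
    convert heqOn
  calc _ ≤ Φ.card * T.card * (Fintype.card V ^ 2) ^ E.card := by
        gcongr
        exact card_sym2_le_sq
    _ ≤ Φ.card * T.card * (m ^ E.card * Fintype.card V ^ (endpoints E).card) := by
        gcongr
        exact sq_pow_le_pow_mul_pow Fintype.card_pos hk hm hE
    _ = (Φ.card * Fintype.card V ^ (endpoints E).card) * (T.card * m ^ E.card) := by ring
    _ ≤ (2 ^ Fintype.card U * (2 ^ Fintype.card U * Fintype.card (U ↪ V))) *
          Fintype.card (Sym2 U → Fin m) := by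
        rw [hT]
        exact Nat.mul_le_mul_right _ ((card_filter_map_eq_mul_pow_le E z.1).trans
          (Nat.mul_le_mul_left _ (card_pow_le_two_pow_mul_card_embedding hUV)))
    _ = _ := by
        rw [Fintype.card_prod, show 4 = 2 * 2 by rfl, mul_pow]
        ring

lemma sum_overlap_playPattern_le [Nonempty V] (hk : 0 < k)
    (hUV : 2 * Fintype.card U ≤ Fintype.card V) (hm : Fintype.card V ^ (k - 1) ≤ m ^ k)
    {l : List (Sym2 U)} (hl : LegalPlay k l) (hb : l.length ≤ b) :
    ∑ z : (U ↪ V) × (Sym2 U → Fin m), ∑ z' : (U ↪ V) × (Sym2 U → Fin m),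
        (playPattern b l z.1 z.2).overlap (playPattern b l z'.1 z'.2) ≤
      2 ^ b * 4 ^ Fintype.card U * Fintype.card ((U ↪ V) × (Sym2 U → Fin m)) ^ 2 := by
  have : Nonempty (Sym2 V) := ‹Nonempty V›.map Sym2.diag
  let Z := (U ↪ V) × (Sym2 U → Fin m)
  have hedges (z : Z) (E : Finset (Sym2 U)) (hE : E ∈ l.toFinset.powerset) :
      (∑ z' : Z, if AgreeOn E z z' then Fintype.card (Sym2 V) ^ E.card else 0) ≤
        4 ^ Fintype.card U * Fintype.card Z := by
    rw [← Finset.sum_filter, Finset.sum_const, smul_eq_mul]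
    exact card_filter_agreeOn_mul_pow_le hk hUV hm
      (hl.succ_mul_card_le (Finset.mem_powerset.1 hE)) z
  have hplacement (z : Z) :
      ∑ z' : Z, (playPattern b l z.1 z.2).overlap (playPattern b l z'.1 z'.2) ≤
        2 ^ b * (4 ^ Fintype.card U * Fintype.card Z) :=
    calc _ ≤ ∑ z' : Z, ∑ E ∈ l.toFinset.powerset,
          if AgreeOn E z z' then Fintype.card (Sym2 V) ^ E.card else 0 :=
          Finset.sum_le_sum fun z' _ => overlap_playPattern_le hl.1.1 hb z z'
      _ ≤ ∑ E ∈ l.toFinset.powerset, 4 ^ Fintype.card U * Fintype.card Z := by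
          rw [Finset.sum_comm]
          exact Finset.sum_le_sum fun E hE => hedges z E hE
      _ ≤ _ := by
          rw [Finset.sum_const, smul_eq_mul, Finset.card_powerset]
          gcongr
          · norm_num
          · exact l.toFinset_card_le.trans hb
  calc _ ≤ ∑ _z : Z, 2 ^ b * (4 ^ Fintype.card U * Fintype.card Z) :=
        Finset.sum_le_sum fun z _ => hplacement z
    _ = _ := by
        rw [Finset.sum_const, Finset.card_univ, smul_eq_mul]
        ring

end Overlaps

section Rounds

variable {α V : Type} {F : SimpleGraph α} {r : ℕ} [Fintype V]

/-- The sequences of `L` edges, drawn with replacement and presented after the history `h`, which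
leave the Painter strategy `π` without a monochromatic copy of `F`. -/
noncomputable def failures (F : SimpleGraph α) (π : PainterStrategy V r) (h : EdgeHistory V r)
    (L : ℕ) : Finset (Fin L → Sym2 V) :=
  {f | ¬ HasMonoCopy F (runPainterAux π h (List.ofFn f))}

lemma mem_failures {π : PainterStrategy V r} {h : EdgeHistory V r} {L : ℕ}
    {f : Fin L → Sym2 V} :
    f ∈ failures F π h L ↔ ¬ HasMonoCopy F (runPainterAux π h (List.ofFn f)) :=
  Finset.mem_filter_univ _

lemma append_mem_failures {π : PainterStrategy V r} {h : EdgeHistory V r} {L₁ L₂ : ℕ}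
    {f₁ : Fin L₁ → Sym2 V} {f₂ : Fin L₂ → Sym2 V}
    (hf : Fin.append f₁ f₂ ∈ failures F π h (L₁ + L₂)) :
    f₁ ∈ failures F π h L₁ ∧ f₂ ∈ failures F π (runPainterAux π h (List.ofFn f₁)) L₂ := by
  rw [mem_failures, List.ofFn_fin_append, runPainterAux_append] at hf
  exact ⟨mem_failures.2 fun hcopy => hf (hcopy.mono (subset_runPainterAux π _ _)),
    mem_failures.2 hf⟩

lemma card_failures_add_le (π : PainterStrategy V r) (h : EdgeHistory V r) (L₁ L₂ : ℕ) :
    (failures F π h (L₁ + L₂)).card ≤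
      ∑ f₁ ∈ failures F π h L₁, (failures F π (runPainterAux π h (List.ofFn f₁)) L₂).card := by
  rw [← Finset.card_sigma]
  refine Finset.card_le_card_of_surjOn (fun f => Fin.append f.1 f.2) fun f hf => ?_
  obtain ⟨⟨f₁, f₂⟩, rfl⟩ := (Fin.appendEquiv L₁ L₂).surjective f
  obtain ⟨hf₁, hf₂⟩ := append_mem_failures hf
  exact ⟨⟨f₁, f₂⟩, Finset.mem_sigma.2 ⟨hf₁, hf₂⟩, rfl⟩

lemma pow_mul_card_failures_le {π : PainterStrategy V r} {L A B : ℕ}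
    (hround : ∀ h, A * (failures F π h L).card ≤ B * Fintype.card (Sym2 V) ^ L)
    (M : ℕ) (h : EdgeHistory V r) :
    A ^ M * (failures F π h (M * L)).card ≤ B ^ M * Fintype.card (Sym2 V) ^ (M * L) := by
  induction M generalizing h with
  | zero =>
    rw [Nat.zero_mul, pow_zero, pow_zero, one_mul, one_mul]
    exact (Finset.card_le_univ _).trans_eq (by simp)
  | succ M ih =>
    rw [Nat.succ_mul, Nat.add_comm (M * L)]
    calc A ^ (M + 1) * (failures F π h (L + M * L)).card
        ≤ A ^ (M + 1) * ∑ f ∈ failures F π h L,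
            (failures F π (runPainterAux π h (List.ofFn f)) (M * L)).card :=
          Nat.mul_le_mul_left _ (card_failures_add_le π h _ _)
      _ = A * ∑ f ∈ failures F π h L,
            A ^ M * (failures F π (runPainterAux π h (List.ofFn f)) (M * L)).card := by
          rw [pow_succ', mul_assoc, Finset.mul_sum]
      _ ≤ A * ∑ _f ∈ failures F π h L, B ^ M * Fintype.card (Sym2 V) ^ (M * L) :=
          Nat.mul_le_mul_left _ (Finset.sum_le_sum fun _ _ => ih _)
      _ = A * (failures F π h L).card * (B ^ M * Fintype.card (Sym2 V) ^ (M * L)) := by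
          rw [Finset.sum_const, smul_eq_mul, mul_assoc]
      _ ≤ B * Fintype.card (Sym2 V) ^ L * (B ^ M * Fintype.card (Sym2 V) ^ (M * L)) :=
          Nat.mul_le_mul_right _ (hround h)
      _ = _ := by ring

variable {U : Type} [Fintype U]

/-- The factor by which a round of `card (Sym2 U) * m` random edges can miss a sure win, in which
Painter loses on a copy of Builder's board `U`. It depends on neither the random board nor `m`. -/
noncomputable def roundLoss (U : Type) [Fintype U] (k : ℕ) : ℕ :=
  (finite_setOf_legalPlay U k).toFinset.card ^ 2 *
    (2 ^ Fintype.card (Sym2 U) * 4 ^ Fintype.card U)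

lemma card_pow_le_roundLoss_mul [Nonempty V] {k m : ℕ} (hk : 0 < k)
    (hwin : ∀ π : PainterStrategy U r, ∃ l, LegalPlay k l ∧ HasMonoCopy F (runPainter π l))
    (hUV : 2 * Fintype.card U ≤ Fintype.card V) (hm : Fintype.card V ^ (k - 1) ≤ m ^ k)
    (π : PainterStrategy V r) (h : EdgeHistory V r) :
    Fintype.card (Sym2 V) ^ (Fintype.card (Sym2 U) * m) ≤
      roundLoss U k * Finset.card {f : Fin (Fintype.card (Sym2 U) * m) → Sym2 V |
        HasMonoCopy F (runPainterAux π h (List.ofFn f))} := by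
  have : Nonempty (Sym2 V) := ‹Nonempty V›.map Sym2.diag
  have : Nonempty (U ↪ V) := Function.Embedding.nonempty_of_card_le (by lia)
  have : NeZero m := ⟨by
    rintro rfl
    rw [zero_pow hk.ne', Nat.le_zero] at hm
    exact (pow_pos Fintype.card_pos _).ne' hm⟩
  have hplant (z : (U ↪ V) × (Sym2 U → Fin m)) (f : Fin (Fintype.card (Sym2 U) * m) → Sym2 V) :
      ∃ l ∈ (finite_setOf_legalPlay U k).toFinset,
        (playPattern (Fintype.card (Sym2 U)) l z.1 z.2).plant f ∈
          Finset.filter (fun g => HasMonoCopy F (runPainterAux π h (List.ofFn g))) .univ := by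
    obtain ⟨l, hl, hcopy⟩ := exists_legalPlay_hasMonoCopy_plant hwin le_rfl π h z.1 z.2 f
    exact ⟨l, (finite_setOf_legalPlay U k).mem_toFinset.2 hl, (Finset.mem_filter_univ _).2 hcopy⟩
  have hoverlap := fun l (hl : l ∈ (finite_setOf_legalPlay U k).toFinset) =>
    have hlegal : LegalPlay k l := (finite_setOf_legalPlay U k).mem_toFinset.1 hl
    sum_overlap_playPattern_le hk hUV hm hlegal hlegal.length_le
  simpa only [Fintype.card_fin, roundLoss] using Pattern.card_pow_le_mul_card hplant hoverlap

lemma succ_roundLoss_mul_card_failures_le [Nonempty V] {k m : ℕ} (hk : 0 < k)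
    (hwin : ∀ π : PainterStrategy U r, ∃ l, LegalPlay k l ∧ HasMonoCopy F (runPainter π l))
    (hUV : 2 * Fintype.card U ≤ Fintype.card V) (hm : Fintype.card V ^ (k - 1) ≤ m ^ k)
    (π : PainterStrategy V r) (h : EdgeHistory V r) :
    (roundLoss U k + 1) * (failures F π h (Fintype.card (Sym2 U) * m)).card ≤
      roundLoss U k * Fintype.card (Sym2 V) ^ (Fintype.card (Sym2 U) * m) := by
  have hsuccess := card_pow_le_roundLoss_mul hk hwin hUV hm π h
  have hsplit := Finset.card_filter_add_card_filter_not
    (s := (Finset.univ : Finset (Fin (Fintype.card (Sym2 U) * m) → Sym2 V)))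
    (fun f => HasMonoCopy F (runPainterAux π h (List.ofFn f)))
  rw [Finset.card_univ, Fintype.card_fun, Fintype.card_fin] at hsplit
  change _ + (failures F π h (Fintype.card (Sym2 U) * m)).card = _ at hsplit
  nlinarith

end Rounds

section WithoutReplacement

variable {n N L : ℕ}

lemma card_filter_validSeqFun :
    Finset.card {f : Fin N → Sym2 (Fin n) | ValidSeqFun f} = (n.choose 2).descFactorial N := by
  let toEmbedding : {f : Fin N → Sym2 (Fin n) // ValidSeqFun f} ≃
      (Fin N ↪ {e : Sym2 (Fin n) // ¬ e.IsDiag}) :=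
    { toFun := fun f => ⟨fun i => ⟨f.1 i, f.2.2 i⟩, fun _ _ h => f.2.1 (congrArg Subtype.val h)⟩
      invFun := fun g => ⟨fun i => g i, Subtype.val_injective.comp g.injective, fun i => (g i).2⟩ }
  rw [← Fintype.card_subtype, Fintype.card_congr toEmbedding, Fintype.card_embedding_eq,
    Sym2.card_subtype_not_diag, Fintype.card_fin, Fintype.card_fin]

lemma onlineProb_eq_card_div (P : (Fin N → Sym2 (Fin n)) → Prop) :
    onlineProb n N P =
      Finset.card {f | ValidSeqFun f ∧ P f} / ((n.choose 2).descFactorial N : ℝ) := by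
  simp only [onlineProb, ← card_filter_validSeqFun, ← Set.ncard_coe_finset,
    Finset.coe_filter_univ]

lemma onlineProb_nonneg (P : (Fin N → Sym2 (Fin n)) → Prop) : 0 ≤ onlineProb n N P := by
  rw [onlineProb]
  positivity

lemma onlineProb_eq_one_sub_onlineProb_not (hN : N ≤ n.choose 2)
    (P : (Fin N → Sym2 (Fin n)) → Prop) :
    onlineProb n N P = 1 - onlineProb n N fun f => ¬ P f := by
  have hpos : (0 : ℝ) < (n.choose 2).descFactorial N := mod_cast Nat.descFactorial_pos.2 hN
  have hsplit := Finset.card_filter_add_card_filter_not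
    (s := ({f | ValidSeqFun f} : Finset (Fin N → Sym2 (Fin n)))) P
  rw [Finset.filter_filter, Finset.filter_filter, card_filter_validSeqFun] at hsplit
  rw [onlineProb_eq_card_div, onlineProb_eq_card_div, eq_sub_iff_add_eq, ← add_div,
    div_eq_one_iff_eq hpos.ne']
  norm_cast
  convert hsplit

lemma card_filter_not_isDiag_sdiff_image {f : Fin N → Sym2 (Fin n)} (hf : ValidSeqFun f) :
    (Finset.filter (fun e : Sym2 (Fin n) => ¬ e.IsDiag) .univ \ Finset.univ.image f).card =
      n.choose 2 - N := by
  rw [Finset.card_sdiff_of_subset, Finset.card_image_of_injective _ hf.1, Finset.card_univ,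
    Fintype.card_fin, ← Fintype.card_subtype, Sym2.card_subtype_not_diag, Fintype.card_fin]
  intro e he
  obtain ⟨i, -, rfl⟩ := Finset.mem_image.1 he
  exact (Finset.mem_filter_univ _).2 (hf.2 i)

lemma ValidSeqFun.init {f : Fin (N + 1) → Sym2 (Fin n)} (hf : ValidSeqFun f) :
    ValidSeqFun (Fin.init f) :=
  ⟨hf.1.comp (Fin.castSucc_injective N), fun i => hf.2 i.castSucc⟩

lemma card_filter_validSeqFun_and_succ_le {P : (Fin (N + 1) → Sym2 (Fin n)) → Prop}
    {Q : (Fin N → Sym2 (Fin n)) → Prop} (hPQ : ∀ f, P f → Q (Fin.init f)) :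
    Finset.card {f | ValidSeqFun f ∧ P f} ≤
      (n.choose 2 - N) * Finset.card {f | ValidSeqFun f ∧ Q f} := by
  let init (f : Fin (N + 1) → Sym2 (Fin n)) : Fin N → Sym2 (Fin n) := Fin.init f
  refine Finset.card_le_mul_card_image_of_maps_to (f := init) (fun f hf => ?_) _ fun g hg => ?_
  · obtain ⟨hvalid, hP⟩ := (Finset.mem_filter_univ f).1 hf
    exact (Finset.mem_filter_univ _).2 ⟨hvalid.init, hPQ f hP⟩
  · rw [← card_filter_not_isDiag_sdiff_image ((Finset.mem_filter_univ _).1 hg).1]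
    refine Finset.card_le_card_of_injOn (fun f => f (Fin.last N)) ?_ ?_
    · intro f hf
      obtain ⟨hmem, rfl⟩ := Finset.mem_filter.1 (Finset.mem_coe.1 hf)
      obtain ⟨hvalid, -⟩ := (Finset.mem_filter_univ f).1 hmem
      simp [init, Fin.init, hvalid.2, hvalid.1.eq_iff, Fin.castSucc_ne_last]
    · intro f hf f' hf' hlast
      have hinit : init f = init f' := (Finset.mem_filter.1 (Finset.mem_coe.1 hf)).2.trans
        (Finset.mem_filter.1 (Finset.mem_coe.1 hf')).2.symm
      funext i
      induction i using Fin.lastCases with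
      | last => exact hlast
      | cast i => exact congrFun hinit i

lemma onlineProb_succ_le (hN : N + 1 ≤ n.choose 2) {P : (Fin (N + 1) → Sym2 (Fin n)) → Prop}
    {Q : (Fin N → Sym2 (Fin n)) → Prop} (hPQ : ∀ f, P f → Q (Fin.init f)) :
    onlineProb n (N + 1) P ≤ onlineProb n N Q := by
  have hpos : (0 : ℝ) < (n.choose 2).descFactorial N :=
    mod_cast Nat.descFactorial_pos.2 (Nat.le_of_succ_le hN)
  have hpos' : (0 : ℝ) < (n.choose 2 - N : ℕ) := mod_cast Nat.sub_pos_of_lt hN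
  rw [onlineProb_eq_card_div, onlineProb_eq_card_div, Nat.descFactorial_succ, Nat.cast_mul,
    ← div_div]
  gcongr
  rw [div_le_iff₀' hpos']
  exact_mod_cast card_filter_validSeqFun_and_succ_le hPQ

lemma onlineProb_not_onlineMonoCopy_anti {α : Type} {F : SimpleGraph α} {r : ℕ}
    (π : PainterStrategy (Fin n) r) (hLN : L ≤ N) (hN : N ≤ n.choose 2) :
    onlineProb n N (fun f => ¬ OnlineMonoCopy F π f) ≤
      onlineProb n L (fun f => ¬ OnlineMonoCopy F π f) := by
  induction N, hLN using Nat.le_induction with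
  | base => exact le_rfl
  | succ N _ ih =>
    refine (onlineProb_succ_le hN fun f hf hcopy => hf ?_).trans (ih (Nat.le_of_succ_le hN))
    rw [OnlineMonoCopy, runPainter, List.ofFn_succ', List.concat_eq_append, runPainterAux_append]
    exact hcopy.mono (subset_runPainterAux π _ _)

lemma pow_le_two_mul_sub_pow {x d : ℝ} (hx : 0 < x) (hd : d ≤ x) (hL : 2 * (L * d) ≤ x) :
    x ^ L ≤ 2 * (x - d) ^ L := by
  have hbernoulli : 1 + L * -(d / x) ≤ (1 + -(d / x)) ^ L := by
    refine one_add_mul_le_pow ?_ L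
    linarith [(div_le_one hx).2 hd]
  have hhalf : L * (d / x) ≤ 1 / 2 := by
    rw [← mul_div_assoc, div_le_iff₀ hx]
    linarith
  calc x ^ L = 2 * (x ^ L * (1 / 2)) := by ring
    _ ≤ 2 * (x ^ L * (1 + -(d / x)) ^ L) := by
        gcongr
        linarith
    _ = 2 * (x - d) ^ L := by
        rw [← mul_pow, mul_add, mul_neg, mul_div_cancel₀ _ hx.ne', mul_one, sub_eq_add_neg]

lemma card_sym2_pow_le_two_mul_descFactorial (hL : 8 * L ≤ n) :
    (Fintype.card (Sym2 (Fin n)) : ℝ) ^ L ≤ 2 * (n.choose 2).descFactorial L := by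
  obtain rfl | hpos := L.eq_zero_or_pos
  · norm_num
  have hcard : (Fintype.card (Sym2 (Fin n)) : ℝ) = n * (n + 1) / 2 := by
    rw [Sym2.card, Fintype.card_fin, Nat.cast_choose_two]
    push_cast
    ring
  have hchoose : (n.choose 2 : ℝ) = n * (n + 1) / 2 - n := by
    rw [Nat.cast_choose_two]
    ring
  have hL' : 8 * (L : ℝ) ≤ n := mod_cast hL
  have hn : (8 : ℝ) ≤ n := mod_cast (by lia : 8 ≤ n)
  have hd : (n + L : ℝ) ≤ n * (n + 1) / 2 := by nlinarith
  have hLle : L ≤ n.choose 2 + 1 := by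
    have : (L : ℝ) ≤ n.choose 2 + 1 := by linarith
    exact_mod_cast this
  rw [hcard]
  refine (pow_le_two_mul_sub_pow (d := n + L) (by positivity) hd (by nlinarith)).trans ?_
  gcongr
  calc ((n * (n + 1) / 2 - (n + L)) ^ L : ℝ) ≤ ((n.choose 2 + 1 - L : ℕ) : ℝ) ^ L := by
        refine pow_le_pow_left₀ (sub_nonneg.2 hd) ?_ L
        rw [Nat.cast_sub hLle]
        push_cast
        linarith
    _ ≤ _ := mod_cast Nat.pow_sub_le_descFactorial _ _

lemma onlineProb_le_two_mul (hL : 8 * L ≤ n) {P : (Fin L → Sym2 (Fin n)) → Prop}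
    {W : Finset (Fin L → Sym2 (Fin n))} (hPW : ∀ f, P f → f ∈ W) {c : ℝ} (hc : 0 ≤ c)
    (hW : (W.card : ℝ) ≤ c * Fintype.card (Sym2 (Fin n)) ^ L) :
    onlineProb n L P ≤ 2 * c := by
  rw [onlineProb_eq_card_div]
  refine div_le_of_le_mul₀ (by positivity) (by positivity) ?_
  calc (Finset.card {f | ValidSeqFun f ∧ P f} : ℝ) ≤ W.card := by
        gcongr
        exact fun f hf => hPW f ((Finset.mem_filter_univ f).1 hf).2
    _ ≤ c * Fintype.card (Sym2 (Fin n)) ^ L := hW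
    _ ≤ c * (2 * (n.choose 2).descFactorial L) := by
        gcongr
        exact card_sym2_pow_le_two_mul_descFactorial hL
    _ = 2 * c * (n.choose 2).descFactorial L := by ring

end WithoutReplacement

section Asymptotics

lemma pow_pred_le_ceil_rpow_pow {k : ℕ} (hk : 0 < k) (n : ℕ) :
    n ^ (k - 1) ≤ ⌈(n : ℝ) ^ (1 - 1 / k : ℝ)⌉₊ ^ k := by
  have hexponent : (1 - 1 / k : ℝ) * k = (k - 1 : ℕ) := by
    rw [Nat.cast_pred hk]
    field_simp
  have hreal : (n : ℝ) ^ (k - 1) ≤ (⌈(n : ℝ) ^ (1 - 1 / k : ℝ)⌉₊ : ℝ) ^ k := by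
    rw [← Real.rpow_natCast, ← hexponent, Real.rpow_mul_natCast n.cast_nonneg]
    gcongr
    exact Nat.le_ceil _
  exact_mod_cast hreal

lemma isLittleO_rpow_rpow_atTop {x y : ℝ} (hxy : x < y) :
    (fun t : ℝ => t ^ x) =o[atTop] fun t : ℝ => t ^ y := by
  have hpos : ∀ᶠ t : ℝ in atTop, 0 < t := eventually_gt_atTop 0
  rw [isLittleO_iff_tendsto' (hpos.mono fun t ht h => absurd h (Real.rpow_pos_of_pos ht y).ne')]
  refine (tendsto_rpow_neg_atTop (sub_pos.2 hxy)).congr' (hpos.mono fun t ht => ?_)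
  rw [neg_sub, Real.rpow_sub ht]

lemma eventually_mul_ceil_le {ι : Type*} {l : Filter ι} {u : ι → ℝ} {v : ι → ℕ}
    (hu : ∀ᶠ i in l, 1 ≤ u i) (huv : u =o[l] fun i => (v i : ℝ)) (c : ℕ) :
    ∀ᶠ i in l, c * ⌈u i⌉₊ ≤ v i := by
  filter_upwards [hu, (huv.const_mul_left (2 * c : ℝ)).def one_pos] with i hi hbound
  rw [one_mul, Real.norm_natCast] at hbound
  have hceil := Nat.ceil_le_two_mul (show 2⁻¹ ≤ u i by linarith)
  have : (c * ⌈u i⌉₊ : ℝ) ≤ v i :=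
    calc (c * ⌈u i⌉₊ : ℝ) ≤ c * (2 * u i) := by gcongr
      _ = 2 * c * u i := by ring
      _ ≤ v i := (le_abs_self _).trans hbound
  exact_mod_cast this

end Asymptotics

section Conclusion

variable {α : Type} {F : SimpleGraph α} {r k : ℕ}

lemma BuilderWinsTree.exists_legalPlay (hk : BuilderWinsTree F r k) :
    ∃ a, ∀ π : PainterStrategy (Fin a) r, ∃ l, LegalPlay k l ∧ HasMonoCopy F (runPainter π l) := by
  simpa only [BuilderWinsTree, LegalPlay, and_assoc] using hk

lemma BuilderWinsTree.pos (hk : BuilderWinsTree F r k) (hF : F.edgeSet.Nonempty) (hr : 0 < r) :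
    0 < k := by
  obtain ⟨a, hwin⟩ := hk.exists_legalPlay
  obtain ⟨l, hl, hcopy⟩ := hwin fun _ _ => ⟨0, hr⟩
  exact hl.pos_of_ne_nil (hcopy.ne_nil_of_runPainter _ hF)

lemma onlineProb_not_onlineMonoCopy_le {U : Type} [Fintype U] {n m M N : ℕ} [NeZero n]
    (hk : 0 < k)
    (hwin : ∀ π : PainterStrategy U r, ∃ l, LegalPlay k l ∧ HasMonoCopy F (runPainter π l))
    (hUn : 2 * Fintype.card U ≤ n) (hm : n ^ (k - 1) ≤ m ^ k)
    (hn : 8 * (M * (Fintype.card (Sym2 U) * m)) ≤ n)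
    (hMN : M * (Fintype.card (Sym2 U) * m) ≤ N) (hN : N ≤ n.choose 2)
    (π : PainterStrategy (Fin n) r) :
    onlineProb n N (fun f => ¬ OnlineMonoCopy F π f) ≤
      2 * (roundLoss U k / (roundLoss U k + 1 : ℕ) : ℝ) ^ M := by
  refine (onlineProb_not_onlineMonoCopy_anti π hMN hN).trans
    (onlineProb_le_two_mul hn (fun _ => mem_failures.2) (by positivity) ?_)
  rw [div_pow, div_mul_eq_mul_div, le_div_iff₀' (by positivity)]
  exact_mod_cast pow_mul_card_failures_le (succ_roundLoss_mul_card_failures_le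
    (V := Fin n) hk hwin (by simpa using hUn) (by simpa using hm) π) M []

lemma tendsto_onlineProb_not_onlineMonoCopy (hk : 0 < k) (hwin : BuilderWinsTree F r k)
    {N : ℕ → ℕ} (hN : (fun n : ℕ => (n : ℝ) ^ (1 - 1 / k : ℝ)) =o[atTop] fun n => (N n : ℝ))
    (hNle : ∀ n, N n ≤ n.choose 2) (π : (n : ℕ) → PainterStrategy (Fin n) r) :
    Tendsto (fun n => onlineProb n (N n) fun f => ¬ OnlineMonoCopy F (π n) f) atTop (nhds 0) := by
  obtain ⟨a, hwin⟩ := hwin.exists_legalPlay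
  refine tendsto_order.2 ⟨fun ε hε => .of_forall fun n => hε.trans_le (onlineProb_nonneg _),
    fun ε hε => ?_⟩
  obtain ⟨M, hM⟩ : ∃ M, (roundLoss (Fin a) k / (roundLoss (Fin a) k + 1 : ℕ) : ℝ) ^ M < ε / 2 :=
    exists_pow_lt_of_lt_one (half_pos hε) ((div_lt_one (by positivity)).2 (by simp))
  have hone : ∀ᶠ n : ℕ in atTop, 1 ≤ (n : ℝ) ^ (1 - 1 / k : ℝ) := by
    filter_upwards [eventually_ge_atTop 1] with n hn
    exact Real.one_le_rpow (mod_cast hn) (sub_nonneg.2 (by simpa using Nat.cast_inv_le_one k))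
  have hsmall : (fun n : ℕ => (n : ℝ) ^ (1 - 1 / k : ℝ)) =o[atTop] fun n => (n : ℝ) := by
    simpa only [Real.rpow_one] using! (isLittleO_rpow_rpow_atTop
      (sub_lt_self (1 : ℝ) (by positivity : 0 < (1 / k : ℝ)))).comp_tendsto
      tendsto_natCast_atTop_atTop
  filter_upwards [eventually_ge_atTop 1, eventually_ge_atTop (2 * a),
    eventually_mul_ceil_le hone hN (M * Fintype.card (Sym2 (Fin a))),
    eventually_mul_ceil_le hone hsmall (8 * (M * Fintype.card (Sym2 (Fin a))))]
    with n hpos han hMN hMn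
  have : NeZero n := ⟨Nat.one_le_iff_ne_zero.1 hpos⟩
  refine (onlineProb_not_onlineMonoCopy_le hk hwin (by simpa using han)
    (pow_pred_le_ceil_rpow_pow hk n) ?_ ?_ (hNle n) (π n)).trans_lt ((lt_div_iff₀' two_pos).1 hM)
  · simpa only [mul_assoc] using hMn
  · simpa only [mul_assoc] using hMN

end Conclusion

theorem statement1_general {α : Type} (F : SimpleGraph α) (hF : F.edgeSet.Nonempty) (r k : ℕ)
    (hk : BuilderWinsTree F r k) (N : ℕ → ℕ)
    (hN : (fun n : ℕ => (n : ℝ) ^ ((1 : ℝ) - 1 / (k : ℝ))) =o[atTop] (fun n : ℕ => (N n : ℝ)))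
    (hNle : ∀ n : ℕ, N n ≤ n * (n - 1) / 2)
    (π : (n : ℕ) → PainterStrategy (Fin n) r) :
    Tendsto (fun n : ℕ => onlineProb n (N n) (OnlineMonoCopy F (π n)))
      atTop (nhds 1) := by
  have hr : 0 < r := Fin.pos (π 1 [] (.diag 0))
  have hchoose (n : ℕ) : N n ≤ n.choose 2 := (hNle n).trans_eq n.choose_two_right.symm
  simp_rw [fun n => onlineProb_eq_one_sub_onlineProb_not (hchoose n) (OnlineMonoCopy F (π n))]
  simpa using (tendsto_onlineProb_not_onlineMonoCopy (hk.pos hF hr) hk hN hchoose π).const_sub 1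

/-- upper bound part of Theorem 6. Let `F` be a forest with at least one
edge, `r ≥ 2`, and let `k` be the smallest integer for which Builder wins the deterministic
`F`-avoidance game with `r` colors and tree size restriction `k`. Then for `N(n)` with
`n^(1-1/k) = o(N(n))` and `N(n) ≤ n(n-1)/2`, a.a.s. the board after `N(n)` steps contains a
monochromatic copy of `F`, for every sequence of online Painter strategies. -/
theorem statement1 {α : Type} [Fintype α] (F : SimpleGraph α) (hforest : F.IsAcyclic)
    (hF : F.edgeSet.Nonempty) (r : ℕ) (hr : 2 ≤ r)
    (k : ℕ) (hk : BuilderWinsTree F r k) (hkmin : ∀ j : ℕ, j < k → ¬ BuilderWinsTree F r j)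
    (N : ℕ → ℕ)
    (hN : (fun n : ℕ => (n : ℝ) ^ ((1 : ℝ) - 1 / (k : ℝ))) =o[atTop] (fun n : ℕ => (N n : ℝ)))
    (hNle : ∀ n : ℕ, N n ≤ n * (n - 1) / 2)
    (π : (n : ℕ) → PainterStrategy (Fin n) r) :
    Tendsto (fun n : ℕ => onlineProb n (N n) (OnlineMonoCopy F (π n)))
      atTop (nhds 1) :=
  statement1_general F hF r k hk N hN hNle π
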